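/- arXiv:2509.20259 — 2 statements merged into one kernel-verified Lean document; each statement's English description precedes it below -/
import Mathlib

section
/- There exists an absolute constant C > 0 such that for every real number M ≥ 1, one has |Σ_{x,y} (x + y − M)/(x·y) − (2/ζ(2) − 1)·M| ≤ C·(1 + log M), where the sum is over pairs of coprime positive integers x, y with x ≤ M, y ≤ M and x + y > M. -/
/-!
Coprime pairs in `[1, n]²` with `x + y > n` are the pairs of denominators of consecutive Farey
fractions of order `n`. Passing from `n` to `n + 1` replaces every pair `(x, y)` with
`x + y = n + 1` by `(x, x + y)` and `(x + y, y)`. Under this replacement `1 / (x * y)` is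
conserved, while `1 / x + 1 / y` gains `2 / (n + 1)` for each of the `φ (n + 1)` pairs, so the sum
in question is `2 * ∑_{k ≤ M} φ k / k - M`. The mean value of `φ k / k = ∑_{d ∣ k} μ d / d` is
`∑ μ d / d² = 1 / ζ(2)`, with a total error of harmonic size.
-/

open Finset ArithmeticFunction
open scoped Nat ArithmeticFunction.Moebius ArithmeticFunction.zeta

section FareyPairs

/-- The pairs of denominators of consecutive fractions of `[0, 1]` in the Farey sequence of order
`n`, characterised arithmetically. -/
def fareyPairs (n : ℕ) : Finset (ℕ × ℕ) :=
  {p ∈ Icc 1 n ×ˢ Icc 1 n | n < p.1 + p.2 ∧ p.1.Coprime p.2}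

/-- The ordered pairs of coprime natural numbers with sum `n`: the denominators of the Farey
neighbours between which the fractions with denominator `n` appear. For `n = 1` they include
`(0, 1)` and `(1, 0)`. -/
def coprimeAntidiagonal (n : ℕ) : Finset (ℕ × ℕ) :=
  {p ∈ antidiagonal n | p.1.Coprime p.2}

variable {n : ℕ} {p : ℕ × ℕ}

theorem mem_fareyPairs : p ∈ fareyPairs n ↔
    (p.1 ∈ Icc 1 n ∧ p.2 ∈ Icc 1 n) ∧ n < p.1 + p.2 ∧ p.1.Coprime p.2 := by
  rw [fareyPairs, mem_filter, mem_product]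

theorem fareyPairs_one : fareyPairs 1 = {(1, 1)} := rfl

theorem mem_coprimeAntidiagonal :
    p ∈ coprimeAntidiagonal n ↔ p.1 + p.2 = n ∧ p.1.Coprime p.2 := by
  rw [coprimeAntidiagonal, mem_filter, HasAntidiagonal.mem_antidiagonal]

theorem pos_of_mem_coprimeAntidiagonal (hn : n ≠ 1) (hp : p ∈ coprimeAntidiagonal n) :
    0 < p.1 ∧ 0 < p.2 := by
  obtain ⟨x, y⟩ := p
  obtain ⟨hsum, hcop⟩ := mem_coprimeAntidiagonal.1 hp
  constructor <;> refine Nat.pos_of_ne_zero fun h ↦ hn ?_ <;> simp_all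

theorem card_coprimeAntidiagonal (hn : n ≠ 1) : #(coprimeAntidiagonal n) = φ n := by
  rw [Nat.totient_eq_card_coprime]
  refine card_nbij' Prod.fst (fun x ↦ (x, n - x)) (fun p hp ↦ ?_) (fun x hx ↦ ?_)
    (fun p hp ↦ ?_) fun _ _ ↦ rfl
  · have hpos := pos_of_mem_coprimeAntidiagonal hn hp
    obtain ⟨rfl, hcop⟩ := mem_coprimeAntidiagonal.1 hp
    simpa [hpos.2, Nat.coprime_comm] using hcop
  · obtain ⟨hlt, hcop⟩ := mem_filter.1 hx
    have hle : x ≤ n := (mem_range.1 hlt).le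
    exact mem_coprimeAntidiagonal.2
      ⟨Nat.add_sub_cancel' hle, (Nat.coprime_sub_self_right hle).2 hcop.symm⟩
  · obtain ⟨rfl, -⟩ := mem_coprimeAntidiagonal.1 hp
    simp

theorem filter_fareyPairs_add_eq_succ (hn : n ≠ 0) :
    {p ∈ fareyPairs n | p.1 + p.2 = n + 1} = coprimeAntidiagonal (n + 1) := by
  ext p
  have hpos := pos_of_mem_coprimeAntidiagonal (p := p) (n := n + 1) (by lia)
  simp only [mem_filter, mem_fareyPairs, mem_coprimeAntidiagonal, mem_Icc] at hpos ⊢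
  grind

theorem fareyPairs_succ (hn : n ≠ 0) :
    fareyPairs (n + 1) = {p ∈ fareyPairs n | p.1 + p.2 ≠ n + 1} ∪
      ((coprimeAntidiagonal (n + 1)).image (fun p ↦ (p.1, p.1 + p.2)) ∪
        (coprimeAntidiagonal (n + 1)).image (fun p ↦ (p.1 + p.2, p.2))) := by
  ext ⟨x, y⟩
  simp only [mem_fareyPairs, mem_Icc, ne_eq, mem_union, mem_filter, mem_image,
    mem_coprimeAntidiagonal, Prod.mk.injEq, Prod.exists]
  constructor
  · rintro ⟨⟨hx, hy⟩, hsum, hcop⟩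
    rcases eq_or_ne y (n + 1) with rfl | hyn
    · exact .inr <| .inl ⟨x, n + 1 - x, ⟨by lia, (Nat.coprime_sub_self_right hx.2).2 hcop⟩,
        rfl, by lia⟩
    rcases eq_or_ne x (n + 1) with rfl | hxn
    · exact .inr <| .inr ⟨n + 1 - y, y, ⟨by lia, (Nat.coprime_sub_self_left hy.2).2 hcop⟩,
        by lia, rfl⟩
    · exact .inl ⟨⟨by lia, by lia, hcop⟩, by lia⟩
  · have hpos := fun a b ↦ pos_of_mem_coprimeAntidiagonal (p := (a, b)) (n := n + 1) (by lia)
    simp only [mem_coprimeAntidiagonal] at hpos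
    rintro (⟨⟨hxy, hsum, hcop⟩, hne⟩ | ⟨a, b, hab, rfl, rfl⟩ | ⟨a, b, hab, rfl, rfl⟩)
    · exact ⟨by lia, by lia, hcop⟩
    · have := hpos a b hab
      exact ⟨by lia, by lia, by simpa using hab.2⟩
    · have := hpos a b hab
      exact ⟨by lia, by lia, by simpa using hab.2⟩

theorem sum_fareyPairs_succ {A : Type*} [AddCommGroup A] (f : ℕ × ℕ → A) (hn : n ≠ 0) :
    ∑ p ∈ fareyPairs (n + 1), f p = ∑ p ∈ fareyPairs n, f p +
      ∑ p ∈ coprimeAntidiagonal (n + 1), (f (p.1, p.1 + p.2) + f (p.1 + p.2, p.2) - f p) := by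
  have hpos := fun a b ↦ pos_of_mem_coprimeAntidiagonal (p := (a, b)) (n := n + 1) (by lia)
  have hinj_left : Function.Injective fun p : ℕ × ℕ ↦ (p.1, p.1 + p.2) := by
    rintro ⟨a, b⟩ ⟨c, d⟩ h
    grind
  have hinj_right : Function.Injective fun p : ℕ × ℕ ↦ (p.1 + p.2, p.2) := by
    rintro ⟨a, b⟩ ⟨c, d⟩ h
    grind
  rw [fareyPairs_succ hn, sum_union, sum_union, sum_image hinj_left.injOn,
    sum_image hinj_right.injOn, ← sum_filter_add_sum_filter_not (fareyPairs n)
    (fun p ↦ p.1 + p.2 = n + 1), filter_fareyPairs_add_eq_succ hn, sum_sub_distrib,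
    sum_add_distrib]
  · abel
  · rw [disjoint_left]
    simp only [mem_image, mem_coprimeAntidiagonal] at hpos ⊢
    grind
  · rw [disjoint_left]
    simp only [mem_image, mem_union, mem_filter, mem_fareyPairs, mem_Icc, mem_coprimeAntidiagonal]
    grind

end FareyPairs

theorem sum_fareyPairs_one_div_mul {n : ℕ} (hn : 1 ≤ n) :
    ∑ p ∈ fareyPairs n, 1 / ((p.1 : ℝ) * p.2) = 1 := by
  induction n, hn using Nat.le_induction with
  | base => simp [fareyPairs_one]
  | succ n hn ih =>
    rw [sum_fareyPairs_succ _ (by lia), ih, add_eq_left]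
    refine sum_eq_zero fun p hp ↦ ?_
    obtain ⟨hx, hy⟩ := pos_of_mem_coprimeAntidiagonal (by lia) hp
    push_cast
    field_simp
    ring

theorem sum_fareyPairs_add_div_mul {n : ℕ} (hn : 1 ≤ n) :
    ∑ p ∈ fareyPairs n, ((p.1 : ℝ) + p.2) / (p.1 * p.2) = 2 * ∑ k ∈ Ioc 0 n, (φ k : ℝ) / k := by
  induction n, hn using Nat.le_induction with
  | base => norm_num [fareyPairs_one]
  | succ n hn ih =>
    have hgain : ∀ p ∈ coprimeAntidiagonal (n + 1),
        ((p.1 : ℝ) + (p.1 + p.2 : ℕ)) / (p.1 * (p.1 + p.2 : ℕ)) +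
          ((p.1 + p.2 : ℕ) + (p.2 : ℝ)) / ((p.1 + p.2 : ℕ) * p.2) -
          ((p.1 : ℝ) + p.2) / (p.1 * p.2) = 2 / (n + 1 : ℕ) := by
      intro p hp
      obtain ⟨hx, hy⟩ := pos_of_mem_coprimeAntidiagonal (by lia) hp
      rw [← (mem_coprimeAntidiagonal.1 hp).1]
      push_cast
      field_simp
      ring
    rw [sum_fareyPairs_succ _ (by lia), ih, sum_congr rfl hgain, sum_const,
      card_coprimeAntidiagonal (by lia), sum_Ioc_succ_top n.zero_le]
    ring

theorem sum_fareyPairs_add_sub_div_mul {n : ℕ} (hn : 1 ≤ n) (t : ℝ) :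
    ∑ p ∈ fareyPairs n, ((p.1 : ℝ) + p.2 - t) / (p.1 * p.2) =
      2 * ∑ k ∈ Ioc 0 n, (φ k : ℝ) / k - t := by
  simp_rw [sub_div _ t, sum_sub_distrib, sum_fareyPairs_add_div_mul hn, div_eq_mul_one_div t,
    ← mul_sum, sum_fareyPairs_one_div_mul hn, mul_one]

theorem sum_sum_ite_eq_sum_fareyPairs {A : Type*} [AddCommMonoid A] (f : ℕ → ℕ → A) {M : ℝ}
    (hM : 0 ≤ M) :
    ∑ x ∈ Icc 1 ⌊M⌋₊, ∑ y ∈ Icc 1 ⌊M⌋₊,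
        (if M < (x : ℝ) + y ∧ Nat.gcd x y = 1 then f x y else 0) =
      ∑ p ∈ fareyPairs ⌊M⌋₊, f p.1 p.2 := by
  simp_rw [fareyPairs, sum_filter, sum_product, Nat.floor_lt hM, Nat.cast_add]

theorem abs_sum_mul_zeta_sub_mul_sum_le (g : ArithmeticFunction ℝ) {x : ℝ} (hx : 0 ≤ x) :
    |∑ k ∈ Ioc 0 ⌊x⌋₊, (g * ζ) k - x * ∑ d ∈ Ioc 0 ⌊x⌋₊, g d / d| ≤
      ∑ d ∈ Ioc 0 ⌊x⌋₊, |g d| := by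
  rw [sum_Ioc_mul_zeta_eq_sum, mul_sum, ← sum_sub_distrib]
  refine (abs_sum_le_sum_abs _ _).trans (sum_le_sum fun d _ ↦ ?_)
  have hfloor : |(⌊x / d⌋₊ : ℝ) - x / d| ≤ 1 := by
    rw [abs_le]
    constructor <;> linarith [Nat.floor_le (show 0 ≤ x / d by positivity),
      Nat.lt_floor_add_one (x / d)]
  calc |g d * (⌊x⌋₊ / d : ℕ) - x * (g d / d)|
      = |g d| * |(⌊x / d⌋₊ : ℝ) - x / d| := by
        rw [Nat.floor_div_natCast, ← abs_mul]
        ring_nf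
    _ ≤ |g d| := mul_le_of_le_one_right (abs_nonneg _) hfloor

theorem norm_sum_Ioc_sub_le_of_hasSum {E : Type*} [NormedAddCommGroup E] {f : ℕ → E} {s : E}
    (hs : HasSum f s) (hf : ∀ d, ‖f d‖ ≤ ((d : ℝ) ^ 2)⁻¹) {N : ℕ} (hN : N ≠ 0) :
    ‖∑ d ∈ Ioc 0 N, f d - s‖ ≤ (N : ℝ)⁻¹ := by
  have hzero : f 0 = 0 := norm_le_zero_iff.1 (by simpa using hf 0)
  have hpartial (K : ℕ) : ∑ d ∈ range (K + 1), f d = ∑ d ∈ Ioc 0 K, f d := by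
    rw [Nat.range_succ_eq_Icc_zero, ← sum_Ioc_add_eq_sum_Icc K.zero_le, hzero, add_zero]
  have hlim : Filter.Tendsto (fun K ↦ ‖∑ d ∈ Ioc 0 N, f d - ∑ d ∈ Ioc 0 K, f d‖) Filter.atTop
      (nhds ‖∑ d ∈ Ioc 0 N, f d - s‖) := by
    simp_rw [← hpartial _]
    exact ((hs.tendsto_sum_nat.comp (Filter.tendsto_add_atTop_nat 1)).const_sub _).norm
  refine le_of_tendsto hlim ?_
  filter_upwards [Filter.eventually_ge_atTop N] with K hK
  calc ‖∑ d ∈ Ioc 0 N, f d - ∑ d ∈ Ioc 0 K, f d‖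
      = ‖∑ d ∈ Ioc N K, f d‖ := by
        rw [← sum_Ioc_consecutive f N.zero_le hK, sub_add_cancel_left, norm_neg]
    _ ≤ ∑ d ∈ Ioc N K, ((d : ℝ) ^ 2)⁻¹ := norm_sum_le_of_le _ fun d _ ↦ hf d
    _ ≤ (N : ℝ)⁻¹ - (K : ℝ)⁻¹ := sum_Ioc_inv_sq_le_sub hN hK
    _ ≤ (N : ℝ)⁻¹ := sub_le_self _ (by positivity)

theorem abs_sum_mul_zeta_sub_mul_le_of_hasSum {g : ArithmeticFunction ℝ} {s : ℝ}
    (hg : ∀ d, |g d| ≤ (d : ℝ)⁻¹) (hs : HasSum (fun d ↦ g d / d) s) {x : ℝ} (hx : 1 ≤ x) :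
    |∑ k ∈ Ioc 0 ⌊x⌋₊, (g * ζ) k - x * s| ≤ 3 + Real.log x := by
  have hN : 1 ≤ ⌊x⌋₊ := (Nat.one_le_floor_iff x).2 hx
  have hconv : |∑ k ∈ Ioc 0 ⌊x⌋₊, (g * ζ) k - x * ∑ d ∈ Ioc 0 ⌊x⌋₊, g d / d| ≤
      1 + Real.log x := by
    refine (abs_sum_mul_zeta_sub_mul_sum_le g (by linarith)).trans
      ((sum_le_sum fun d _ ↦ hg d).trans ?_)
    simpa [harmonic_eq_sum_Icc] using! harmonic_floor_le_one_add_log x hx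
  have htail : |∑ d ∈ Ioc 0 ⌊x⌋₊, g d / d - s| ≤ (⌊x⌋₊ : ℝ)⁻¹ := by
    refine norm_sum_Ioc_sub_le_of_hasSum hs (fun d ↦ ?_) (by lia)
    rw [Real.norm_eq_abs, abs_div, Nat.abs_cast, sq, mul_inv, div_eq_mul_inv]
    gcongr
    exact hg d
  have hmul_tail : |x * ∑ d ∈ Ioc 0 ⌊x⌋₊, g d / d - x * s| ≤ 2 := by
    have hx_le : x ≤ 2 * ⌊x⌋₊ := by
      have : (1 : ℝ) ≤ ⌊x⌋₊ := by exact_mod_cast hN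
      linarith [Nat.lt_floor_add_one x]
    calc |x * ∑ d ∈ Ioc 0 ⌊x⌋₊, g d / d - x * s|
        = x * |∑ d ∈ Ioc 0 ⌊x⌋₊, g d / d - s| := by
          rw [← mul_sub, abs_mul, abs_of_nonneg (by linarith)]
      _ ≤ 2 * ⌊x⌋₊ * (⌊x⌋₊ : ℝ)⁻¹ := by gcongr
      _ = 2 := by field_simp
  linarith [abs_sub_le (∑ k ∈ Ioc 0 ⌊x⌋₊, (g * ζ) k) (x * ∑ d ∈ Ioc 0 ⌊x⌋₊, g d / d) (x * s)]

theorem pdiv_moebius_id_mul_zeta_apply (n : ℕ) :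
    (pdiv (μ : ArithmeticFunction ℝ) ↑ArithmeticFunction.id * ζ) n = (φ n : ℝ) / n := by
  rcases n.eq_zero_or_pos with rfl | hn
  · simp
  have hinv : ∑ p ∈ n.divisorsAntidiagonal, (μ p.1 : ℝ) * p.2 = φ n :=
    (sum_eq_iff_sum_mul_moebius_eq (f := fun m ↦ (φ m : ℝ)) (g := (↑))).1
      (fun m _ ↦ by exact_mod_cast m.sum_totient) n hn
  rw [← hinv, sum_div, coe_mul_zeta_apply, ← Nat.sum_divisorsAntidiagonal fun d _ ↦ pdiv _ _ d]
  refine sum_congr rfl fun p hp ↦ ?_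
  obtain ⟨rfl, -⟩ := Nat.mem_divisorsAntidiagonal.1 hp
  obtain ⟨hp₁, hp₂⟩ := mul_ne_zero_iff.1 hn.ne'
  simp only [pdiv_apply, intCoe_apply, natCoe_apply, id_apply]
  push_cast
  field_simp

theorem hasSum_moebius_div_sq :
    HasSum (fun d : ℕ ↦ (μ d : ℝ) / (d : ℝ) ^ 2) (Real.pi ^ 2 / 6)⁻¹ := by
  have hs : (1 : ℝ) < (2 : ℂ).re := by norm_num
  have hL : LSeries (fun d ↦ (μ d : ℂ)) 2 = (Real.pi ^ 2 / 6 : ℂ)⁻¹ := by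
    rw [← riemannZeta_two, ← LSeries_one_eq_riemannZeta hs]
    exact eq_inv_of_mul_eq_one_right (LSeries_one_mul_Lseries_moebius hs)
  have hsum : HasSum (LSeries.term (fun d ↦ (μ d : ℂ)) 2) (Real.pi ^ 2 / 6 : ℂ)⁻¹ :=
    hL ▸ (LSeriesSummable_moebius_iff.2 hs).LSeriesHasSum
  rw [← Complex.hasSum_ofReal]
  convert! hsum using 1
  · ext d
    rcases eq_or_ne d 0 with rfl | hd <;> simp [LSeries.term_def, *]
  · push_cast
    rfl

theorem abs_sum_totient_div_sub_mul_le {x : ℝ} (hx : 1 ≤ x) :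
    |∑ k ∈ Ioc 0 ⌊x⌋₊, (φ k : ℝ) / k - x * (Real.pi ^ 2 / 6)⁻¹| ≤ 3 + Real.log x := by
  simp_rw [← pdiv_moebius_id_mul_zeta_apply]
  refine abs_sum_mul_zeta_sub_mul_le_of_hasSum (fun d ↦ ?_) ?_ hx
  · have hμ : |(μ d : ℝ)| ≤ 1 := by exact_mod_cast abs_moebius_le_one
    simpa [abs_div, div_eq_mul_inv] using! mul_le_of_le_one_left (inv_nonneg.2 d.cast_nonneg) hμ
  · simpa [div_div, ← sq] using! hasSum_moebius_div_sq

theorem stmt7 :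
    ∃ C : ℝ, 0 < C ∧ ∀ M : ℝ, 1 ≤ M →
      |(∑ x ∈ Finset.Icc 1 ⌊M⌋₊, ∑ y ∈ Finset.Icc 1 ⌊M⌋₊,
          if M < (x : ℝ) + (y : ℝ) ∧ Nat.gcd x y = 1 then
            ((x : ℝ) + (y : ℝ) - M) / ((x : ℝ) * (y : ℝ))
          else 0)
        - (2 / (Real.pi ^ 2 / 6) - 1) * M| ≤ C * (1 + Real.log M) := by
  refine ⟨6, by norm_num, fun M hM ↦ ?_⟩
  rw [sum_sum_ite_eq_sum_fareyPairs (fun x y ↦ ((x : ℝ) + y - M) / (x * y)) (by linarith),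
    sum_fareyPairs_add_sub_div_mul ((Nat.one_le_floor_iff M).2 hM)]
  calc |2 * ∑ k ∈ Ioc 0 ⌊M⌋₊, (φ k : ℝ) / k - M - (2 / (Real.pi ^ 2 / 6) - 1) * M|
      = 2 * |∑ k ∈ Ioc 0 ⌊M⌋₊, (φ k : ℝ) / k - M * (Real.pi ^ 2 / 6)⁻¹| := by
        rw [← abs_two, ← abs_mul, abs_two]
        ring_nf
    _ ≤ 2 * (3 + Real.log M) := by gcongr; exact abs_sum_totient_div_sub_mul_le hM
    _ ≤ 6 * (1 + Real.log M) := by linarith [Real.log_nonneg hM]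
end

section
/- For every ε > 0 there exists a constant C_ε > 0 with the following property. Let N, h be positive integers with 1 ≤ h ≤ 2N², let r be a positive divisor of h with r ≤ N, and set m = h/r and M = N/r (a rational number). Then the number of pairs of coprime positive integers x, y with x ≤ M, y ≤ M, x + y > M, and such that U(x,y) is an integer, is at most C_ε · M · m^ε. Here, for such a pair (x,y), b₀ = b₀(x,y) is the unique integer with 1 ≤ b₀ ≤ y and y | (b₀·x − m), d₀ = d₀(x,y) = (m − b₀·x)/y, and U(x,y) = max{(1 − b₀)/y, (d₀ − N)/x}. -/
open scoped Classical

/-- The predicate: coprime positive `x,y` with `x ≤ M`, `y ≤ M`, `x + y > M` (where `M = N/r`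
as a rational, encoded via multiplication by `r`), such that, for the unique integer
`b₀ ∈ [1,y]` with `y ∣ (b₀·x − m)` (where `m = h/r`) and `d₀ = (m − b₀·x)/y`,
the quantity `U(x,y) = max{(1 − b₀)/y, (d₀ − N)/x}` is an integer. -/
def goodPair (N h r : ℕ) (p : ℕ × ℕ) : Prop :=
  p.1 * r ≤ N ∧ p.2 * r ≤ N ∧ N < (p.1 + p.2) * r ∧ Nat.gcd p.1 p.2 = 1 ∧
    ∃ b : ℤ, 1 ≤ b ∧ b ≤ (p.2 : ℤ) ∧ (p.2 : ℤ) ∣ (b * (p.1 : ℤ) - ((h / r : ℕ) : ℤ)) ∧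
      ∃ k : ℤ, (k : ℚ) =
        max ((1 - (b : ℚ)) / (p.2 : ℚ))
          (((((h / r : ℕ) : ℚ) - (b : ℚ) * (p.1 : ℚ)) / (p.2 : ℚ) - (N : ℚ)) / (p.1 : ℚ))

/-!
Fix `y` and suppose that `U(x,y) = k` is an integer. Since `b ≤ y`, we have `k ≥ (1 - b)/y > -1`,
hence `k ≥ 0`. If the maximum is `(1 - b)/y`, which is at most `0`, then `b = 1`, so
`x ≡ m (mod y)`; as `x` lies in the window `(M - y, M]` of length `y`, this leaves one `x`.
Otherwise `m - N y = x (k y + b) > 0`, so `x` divides a positive integer not exceeding `m`, which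
leaves `O(m ^ ε)` values of `x` by the divisor bound. Summing over `y ≤ M` gives the claim.
-/

open Finset

lemma natCast_add_one_le_mul_pow {K : Type*} [Field K] [LinearOrder K] [IsStrictOrderedRing K]
    {c u : K} (hc : 1 < c) (hcu : c ≤ u) (a : ℕ) : (a + 1 : K) ≤ c / (c - 1) * u ^ a := by
  have : 0 < c - 1 := sub_pos.2 hc
  calc (a + 1 : K) ≤ c ^ (a + 1) / (c - 1) := by exact_mod_cast Nat.cast_le_pow_div_sub hc (a + 1)
    _ = c / (c - 1) * c ^ a := by ring
    _ ≤ c / (c - 1) * u ^ a := by gcongr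

lemma natCast_add_one_le_pow {R : Type*} [Semiring R] [PartialOrder R] [IsOrderedRing R]
    {u : R} (hu : 2 ≤ u) (a : ℕ) : (a + 1 : R) ≤ u ^ a := by
  calc (a + 1 : R) ≤ 2 ^ a := by exact_mod_cast Nat.mono_cast (α := R) a.lt_two_pow_self
    _ ≤ u ^ a := pow_le_pow_left₀ zero_le_two hu a

lemma prod_ite_lt_le_pow {R : Type*} [CommSemiring R] [PartialOrder R] [IsOrderedRing R]
    {c : R} (hc : 1 ≤ c) (s : Finset ℕ) (B : ℕ) : ∏ p ∈ s, (if p < B then c else 1) ≤ c ^ B := by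
  have hsub : {p ∈ s | p < B} ⊆ range B := fun p hp ↦ mem_range.2 (mem_filter.1 hp).2
  rw [← prod_filter, prod_const]
  exact pow_le_pow_right₀ hc ((card_le_card hsub).trans_eq (card_range B))

lemma two_le_rpow_of_two_rpow_inv_le {ε t : ℝ} (hε : 0 < ε) (ht : 2 ^ ε⁻¹ ≤ t) :
    2 ≤ t ^ ε :=
  (Real.rpow_inv_le_iff_of_pos zero_le_two ((by positivity : (0 : ℝ) ≤ 2 ^ ε⁻¹).trans ht) hε).1 ht

lemma prod_primeFactors_rpow_pow_factorization (ε : ℝ) {n : ℕ} (hn : n ≠ 0) :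
    ∏ p ∈ n.primeFactors, ((p : ℝ) ^ ε) ^ n.factorization p = (n : ℝ) ^ ε := by
  have hprod : ∏ p ∈ n.primeFactors, (p : ℝ) ^ n.factorization p = n := by
    exact_mod_cast Nat.prod_factorization_pow_eq_self hn
  rw [← hprod, ← Real.finsetProd_rpow _ _ fun _ _ ↦ by positivity]
  exact prod_congr rfl fun p _ ↦ Real.rpow_pow_comm p.cast_nonneg ε _

theorem exists_card_divisors_le_mul_rpow {ε : ℝ} (hε : 0 < ε) :
    ∃ C : ℝ, 0 < C ∧ ∀ n : ℕ, (#n.divisors : ℝ) ≤ C * (n : ℝ) ^ ε := by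
  set c : ℝ := 2 ^ ε
  have hc : 1 < c := Real.one_lt_rpow one_lt_two hε
  set K : ℝ := c / (c - 1)
  have hK : 1 ≤ K := (one_le_div (sub_pos.2 hc)).2 (by linarith)
  set B : ℕ := ⌈(2 : ℝ) ^ ε⁻¹⌉₊
  refine ⟨K ^ B, by positivity, fun n ↦ ?_⟩
  obtain rfl | hn := eq_or_ne n 0
  · simp [Real.zero_rpow hε.ne']
  -- A prime `p ≥ B` has `p ^ ε ≥ 2` and costs nothing; each of the fewer than `B` others costs `K`.
  have hlocal : ∀ p ∈ n.primeFactors, (n.factorization p + 1 : ℝ) ≤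
      (if p < B then K else 1) * ((p : ℝ) ^ ε) ^ n.factorization p := by
    intro p hp
    have hp2 : (2 : ℝ) ≤ p := by exact_mod_cast (Nat.prime_of_mem_primeFactors hp).two_le
    split_ifs with hpB
    · exact natCast_add_one_le_mul_pow hc (Real.rpow_le_rpow zero_le_two hp2 hε.le) _
    · rw [one_mul]
      exact natCast_add_one_le_pow
        (two_le_rpow_of_two_rpow_inv_le hε (Nat.ceil_le.1 (not_lt.1 hpB))) _
  calc (#n.divisors : ℝ) = ∏ p ∈ n.primeFactors, (n.factorization p + 1 : ℝ) := by
        exact_mod_cast Nat.card_divisors hn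
    _ ≤ ∏ p ∈ n.primeFactors, (if p < B then K else 1) * ((p : ℝ) ^ ε) ^ n.factorization p :=
        prod_le_prod (fun _ _ ↦ by positivity) hlocal
    _ ≤ K ^ B * (n : ℝ) ^ ε := by
        rw [prod_mul_distrib, prod_primeFactors_rpow_pow_factorization ε hn]
        gcongr
        exact prod_ite_lt_le_pow hK n.primeFactors B

lemma card_Ioc_add_filter_modEq {y : ℕ} (hy : 0 < y) (a v : ℕ) :
    #{x ∈ Ioc a (a + y) | x ≡ v [MOD y]} = 1 := by
  have hy' : (y : ℚ) ≠ 0 := by positivity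
  have hshift : ((a + y : ℕ) - v : ℚ) / y = (a - v) / y + 1 := by
    push_cast
    field_simp
    ring
  have h := Nat.Ioc_filter_modEq_card a (a + y) hy v
  rw [hshift, Int.floor_add_one] at h
  simpa using h

section IntegralMax

variable {K : Type*} [Field K] [LinearOrder K] [IsStrictOrderedRing K] {b k m N x y : ℤ}

lemma nonneg_of_one_sub_div_le_intCast (hy : 0 < y) (hby : b ≤ y)
    (hk : (1 - b : K) / y ≤ k) : 0 ≤ k := by
  rw [div_le_iff₀ (by exact_mod_cast hy)] at hk
  have hky : 1 - b ≤ k * y := by exact_mod_cast hk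
  by_contra! hneg
  nlinarith

lemma sub_mul_eq_mul_of_intCast_eq_div (hx : x ≠ 0) (hy : y ≠ 0)
    (hk : (k : K) = (((m : K) - b * x) / y - N) / x) : m - N * y = x * (k * y + b) := by
  have hx' : (x : K) ≠ 0 := by exact_mod_cast hx
  have hy' : (y : K) ≠ 0 := by exact_mod_cast hy
  field_simp at hk
  have hk' : k * x * y = m - b * x - y * N := by exact_mod_cast hk
  linear_combination -hk'

theorem eq_one_or_dvd_of_intCast_eq_max (hx : 0 < x) (hb : 1 ≤ b) (hby : b ≤ y)
    (hk : (k : K) = max ((1 - (b : K)) / y) ((((m : K) - b * x) / y - N) / x)) :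
    b = 1 ∨ 0 < m - N * y ∧ x ∣ m - N * y := by
  have hy : 0 < y := by lia
  have hk₀ : 0 ≤ k := nonneg_of_one_sub_div_le_intCast hy hby (hk ▸ le_max_left _ _)
  rcases max_choice ((1 - b : K) / y) ((((m : K) - b * x) / y - N) / x) with hmax | hmax
  · left
    rw [hmax, eq_div_iff (by exact_mod_cast hy.ne')] at hk
    have hky : k * y = 1 - b := by exact_mod_cast hk
    have : 0 ≤ k * y := by positivity
    lia
  · right
    have hfactor := sub_mul_eq_mul_of_intCast_eq_div hx.ne' hy.ne' (hk.trans hmax)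
    exact ⟨hfactor ▸ by positivity, hfactor ▸ dvd_mul_right _ _⟩

end IntegralMax

namespace goodPair

variable {N h r x y : ℕ}

lemma snd_le_div (hr : 0 < r) (H : goodPair N h r (x, y)) : y ≤ N / r :=
  (Nat.le_div_iff_mul_le hr).2 H.2.1

lemma fst_mem_Ioc (hr : 0 < r) (H : goodPair N h r (x, y)) : x ∈ Ioc (N / r - y) (N / r) := by
  have hle : x ≤ N / r := (Nat.le_div_iff_mul_le hr).2 H.1
  have hyN : y ≤ N / r := H.snd_le_div hr
  have hlt : N / r < x + y := (Nat.div_lt_iff_lt_mul hr).2 H.2.2.1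
  exact mem_Ioc.2 ⟨by lia, hle⟩

lemma modEq_or_mem_divisors (hx : 0 < x) (H : goodPair N h r (x, y)) :
    x ≡ h / r [MOD y] ∨ x ∈ (h / r - N * y).divisors := by
  obtain ⟨-, -, -, -, b, hb, hby, hdvd, k, hk⟩ := H
  have hmax := eq_one_or_dvd_of_intCast_eq_max (K := ℚ) (b := b) (k := k) (m := (h / r : ℕ))
    (N := N) (x := x) (y := y) (by exact_mod_cast hx) hb hby
    (by simpa only [Int.cast_natCast] using hk)
  rcases hmax with rfl | ⟨hpos, hxdvd⟩
  · left
    rw [one_mul] at hdvd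
    exact (Nat.modEq_iff_dvd.2 hdvd).symm
  · right
    have hlt : N * y < h / r := by exact_mod_cast sub_pos.1 hpos
    refine Nat.mem_divisors.2 ⟨?_, (Nat.sub_pos_of_lt hlt).ne'⟩
    zify [hlt.le]
    exact_mod_cast hxdvd

lemma card_row_le (hr : 0 < r) (hy : 0 < y) (hyN : y ≤ N / r) :
    #{x ∈ Icc 1 N | goodPair N h r (x, y)} ≤ 1 + #(h / r - N * y).divisors := by
  have hwindow : #{x ∈ Ioc (N / r - y) (N / r) | x ≡ h / r [MOD y]} = 1 := by
    simpa only [Nat.sub_add_cancel hyN] using card_Ioc_add_filter_modEq hy (N / r - y) (h / r)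
  have hsub : {x ∈ Icc 1 N | goodPair N h r (x, y)} ⊆
      {x ∈ Ioc (N / r - y) (N / r) | x ≡ h / r [MOD y]} ∪ (h / r - N * y).divisors := by
    intro x hx
    obtain ⟨hx, H⟩ := mem_filter.1 hx
    exact mem_union.2 <| (H.modEq_or_mem_divisors (mem_Icc.1 hx).1).imp_left
      fun hmod ↦ mem_filter.2 ⟨H.fst_mem_Ioc hr, hmod⟩
  calc #{x ∈ Icc 1 N | goodPair N h r (x, y)} ≤ _ := card_le_card hsub
    _ ≤ _ := card_union_le _ _
    _ = 1 + #(h / r - N * y).divisors := by rw [hwindow]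

lemma card_le_sum_card_row (hr : 0 < r) :
    #{p ∈ Icc 1 N ×ˢ Icc 1 N | goodPair N h r p} ≤
      ∑ y ∈ Icc 1 (N / r), #{x ∈ Icc 1 N | goodPair N h r (x, y)} := by
  have hsub : {p ∈ Icc 1 N ×ˢ Icc 1 N | goodPair N h r p} ⊆
      {p ∈ Icc 1 N ×ˢ Icc 1 (N / r) | goodPair N h r p} := by
    rintro ⟨x, y⟩ hp
    simp only [mem_filter, mem_product, mem_Icc] at hp ⊢
    exact ⟨⟨hp.1.1, hp.1.2.1, hp.2.snd_le_div hr⟩, hp.2⟩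
  refine (card_le_card hsub).trans_eq ?_
  simp only [card_filter, sum_product_right]

end goodPair

theorem stmt8_general (ε : ℝ) (hε : 0 < ε) : ∃ C : ℝ, 0 < C ∧
    ∀ N h r : ℕ, 1 ≤ h → 0 < r → r ∣ h →
      (#{p ∈ Icc 1 N ×ˢ Icc 1 N | goodPair N h r p} : ℝ) ≤
        C * ((N : ℝ) / (r : ℝ)) * ((h / r : ℕ) : ℝ) ^ ε := by
  obtain ⟨C, hC, hdivisors⟩ := exists_card_divisors_le_mul_rpow hε
  refine ⟨1 + C, by positivity, fun N h r hh hr hrh ↦ ?_⟩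
  set m : ℕ := h / r
  have hm₁ : (1 : ℝ) ≤ m := by exact_mod_cast Nat.div_pos (Nat.le_of_dvd hh hrh) hr
  have hrow : ∀ y ∈ Icc 1 (N / r),
      (#{x ∈ Icc 1 N | goodPair N h r (x, y)} : ℝ) ≤ (1 + C) * (m : ℝ) ^ ε := by
    intro y hy
    obtain ⟨hy₀, hyN⟩ := mem_Icc.1 hy
    calc (#{x ∈ Icc 1 N | goodPair N h r (x, y)} : ℝ) ≤ 1 + #(m - N * y).divisors := by
          exact_mod_cast goodPair.card_row_le hr hy₀ hyN
      _ ≤ (m : ℝ) ^ ε + C * (m : ℝ) ^ ε := by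
          gcongr
          · exact Real.one_le_rpow hm₁ hε.le
          · exact (hdivisors _).trans (by gcongr; exact Nat.sub_le _ _)
      _ = (1 + C) * (m : ℝ) ^ ε := by ring
  calc (#{p ∈ Icc 1 N ×ˢ Icc 1 N | goodPair N h r p} : ℝ)
      ≤ ∑ y ∈ Icc 1 (N / r), (#{x ∈ Icc 1 N | goodPair N h r (x, y)} : ℝ) := by
        exact_mod_cast goodPair.card_le_sum_card_row hr
    _ ≤ (N / r : ℕ) * ((1 + C) * (m : ℝ) ^ ε) := by simpa using sum_le_card_nsmul _ _ _ hrow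
    _ ≤ N / r * ((1 + C) * (m : ℝ) ^ ε) := by gcongr; exact Nat.cast_div_le
    _ = (1 + C) * (N / r) * (m : ℝ) ^ ε := by ring

theorem stmt8 :
    ∀ ε : ℝ, 0 < ε → ∃ C : ℝ, 0 < C ∧
      ∀ N h r : ℕ, 0 < N → 1 ≤ h → h ≤ 2 * N ^ 2 → 0 < r → r ∣ h → r ≤ N →
        ((Finset.filter (goodPair N h r) ((Finset.Icc 1 N) ×ˢ (Finset.Icc 1 N))).card : ℝ) ≤
          C * ((N : ℝ) / (r : ℝ)) * ((h / r : ℕ) : ℝ) ^ ε := by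
  intro ε hε
  obtain ⟨C, hC, hcard⟩ := stmt8_general ε hε
  exact ⟨C, hC, fun N h r _ hh _ hr hrh _ ↦ hcard N h r hh hr hrh⟩
end
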